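/- Fix n ≥ 1, a Hermitian 2^n × 2^n matrix O satisfying O·R(π) = R(π)·O for all permutations π ∈ S_n, and a real threshold b. Suppose a finite set S of 2^n × 2^n density matrices (Hermitian, positive semidefinite, trace one) is shattered by the classifier family {ρ ↦ (Tr[U ρ U† O] ≥ b)}, where U ranges over 2^n × 2^n unitary matrices commuting with R(π) for all π ∈ S_n; that is, for every subset T ⊆ S there exists such a unitary U with: for all ρ ∈ S, Tr[U ρ U† O] ≥ b if and only if ρ ∈ T. Then the cardinality of S is at most Te_{n+1} = C(n+3, 3). In particular, the VC dimension of classifiers built from S_n-equivariant QNNs and S_n-equivariant measurements is at most C(n+3,3) ∈ Θ(n³). -/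

import Mathlib

open Matrix
open scoped ComplexOrder

/-- The qubit-defining representation of `S_n`: the permutation matrix acting on the
computational basis (indexed by bitstrings `z : Fin n → Fin 2`) via `R(π)|z⟩ = |z ∘ π⁻¹⟩`. -/
noncomputable def qubitRep (n : ℕ) (π : Equiv.Perm (Fin n)) :
    Matrix (Fin n → Fin 2) (Fin n → Fin 2) ℂ :=
  Matrix.of fun y z => if y = (fun i => z (π.symm i)) then (1 : ℂ) else 0

/-- Joint type (multiset of letter pairs) of two bitstrings. -/
def pairType (n : ℕ) (p : (Fin n → Fin 2) × (Fin n → Fin 2)) : Sym (Fin 2 × Fin 2) n :=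
  ⟨Multiset.map (fun i => (p.1 i, p.2 i)) Finset.univ.val, by simp⟩

lemma exists_perm_of_map_eq {n : ℕ} {β : Type*} [DecidableEq β] (f g : Fin n → β)
    (h : Multiset.map f Finset.univ.val = Multiset.map g Finset.univ.val) :
    ∃ σ : Equiv.Perm (Fin n), ∀ i, f i = g (σ i) := by
  have hcard : ∀ x : β, Fintype.card {i // f i = x} = Fintype.card {i // g i = x} := by
    intro x
    have hx := congrArg (Multiset.count x) h
    rw [Multiset.count_map, Multiset.count_map] at hx
    rw [Fintype.card_subtype, Fintype.card_subtype]
    simpa [Finset.card_def, Finset.filter_val, eq_comm] using hx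
  let e : ∀ x : β, {i // f i = x} ≃ {i // g i = x} := fun x => Fintype.equivOfCardEq (hcard x)
  refine ⟨(Equiv.sigmaFiberEquiv f).symm.trans
    ((Equiv.sigmaCongrRight e).trans (Equiv.sigmaFiberEquiv g)), fun i => ?_⟩
  exact ((e (f i) ⟨i, rfl⟩).2).symm

lemma pairType_eq {n : ℕ} {p q : (Fin n → Fin 2) × (Fin n → Fin 2)}
    (h : pairType n p = pairType n q) :
    ∃ σ : Equiv.Perm (Fin n), p.1 = q.1 ∘ σ ∧ p.2 = q.2 ∘ σ := by
  have h1 := congrArg Subtype.val h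
  obtain ⟨σ, hσ⟩ := exists_perm_of_map_eq _ _ h1
  refine ⟨σ, ?_, ?_⟩
  · funext i; exact congrArg Prod.fst (hσ i)
  · funext i; exact congrArg Prod.snd (hσ i)

lemma pairType_swap {n : ℕ} (p : (Fin n → Fin 2) × (Fin n → Fin 2)) :
    pairType n p.swap = (pairType n p).map Prod.swap := by
  apply Subtype.ext
  simp [pairType, Sym.map, Function.comp_def]

lemma pairType_swap_iff {n : ℕ} (p : (Fin n → Fin 2) × (Fin n → Fin 2))
    (o : Sym (Fin 2 × Fin 2) n) :
    pairType n p.swap = o.map Prod.swap ↔ pairType n p = o := by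
  rw [pairType_swap]
  exact (Sym.map_injective Prod.swap_injective n).eq_iff

lemma comm_inv {n : ℕ} {H : Matrix (Fin n → Fin 2) (Fin n → Fin 2) ℂ}
    (hH : ∀ π : Equiv.Perm (Fin n), H * qubitRep n π = qubitRep n π * H)
    (π : Equiv.Perm (Fin n)) (y z : Fin n → Fin 2) : H (y ∘ π) (z ∘ π) = H y z := by
  have h := congrFun (congrFun (hH π) y) (z ∘ π)
  have e : ∀ w : Fin n → Fin 2, (y = fun i => w (π.symm i)) ↔ w = y ∘ π := by
    intro w
    constructor
    · rintro rfl; funext i; simp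
    · rintro rfl; funext i; simp
  simp only [Matrix.mul_apply, qubitRep, Matrix.of_apply, e] at h
  simpa using h.symm

lemma trace_zero {n : ℕ} {A H : Matrix (Fin n → Fin 2) (Fin n → Fin 2) ℂ}
    (hA : A.IsHermitian)
    (hH : ∀ π : Equiv.Perm (Fin n), H * qubitRep n π = qubitRep n π * H)
    (h0 : ∀ o : Sym (Fin 2 × Fin 2) n,
      ∑ p with pairType n p = o, ((A p.1 p.2).re + (A p.1 p.2).im) = 0) :
    (A * H).trace = 0 := by
  have hre : ∀ o : Sym (Fin 2 × Fin 2) n,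
      ∑ p with pairType n p = o, ((A p.1 p.2).re - (A p.1 p.2).im) = 0 := by
    intro o
    rw [← h0 (o.map Prod.swap)]
    refine Finset.sum_bij' (fun p _ => p.swap) (fun p _ => p.swap) ?_ ?_ ?_ ?_ ?_
    · intro p hp
      simpa [pairType_swap_iff] using hp
    · intro p hp
      have := (pairType_swap_iff p.swap o)
      simp only [Prod.swap_swap] at this
      simpa [this] using hp
    · simp
    · simp
    · intro p hp
      have := hA.apply p.1 p.2
      simp only [Prod.fst_swap, Prod.snd_swap]
      rw [← this]
      simp
  have ha : ∀ o : Sym (Fin 2 × Fin 2) n, ∑ p with pairType n p = o, A p.1 p.2 = 0 := by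
    intro o
    have h1 := h0 o
    have h2 := hre o
    rw [Finset.sum_add_distrib] at h1
    rw [Finset.sum_sub_distrib] at h2
    apply Complex.ext
    · rw [Complex.re_sum, Complex.zero_re]; linarith
    · rw [Complex.im_sum, Complex.zero_im]; linarith
  have ht : (A * H).trace =
      ∑ p : (Fin n → Fin 2) × (Fin n → Fin 2), A p.1 p.2 * H p.2 p.1 := by
    rw [Fintype.sum_prod_type]
    simp [Matrix.trace, Matrix.mul_apply]
  rw [ht, ← Finset.sum_fiberwise _ (pairType n)]
  apply Finset.sum_eq_zero
  intro o _
  by_cases hne : ∃ q, pairType n q = o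
  · obtain ⟨q, rfl⟩ := hne
    have : ∀ p ∈ Finset.univ.filter (fun p => pairType n p = pairType n q),
        A p.1 p.2 * H p.2 p.1 = A p.1 p.2 * H q.2 q.1 := by
      intro p hp
      obtain ⟨σ, h1, h2⟩ := pairType_eq (Finset.mem_filter.1 hp).2
      rw [show H p.2 p.1 = H q.2 q.1 by rw [h1, h2]; exact comm_inv hH σ _ _]
    rw [Finset.sum_congr rfl this, ← Finset.sum_mul, ha, zero_mul]
  · apply Finset.sum_eq_zero
    intro p hp
    exact absurd ⟨p, (Finset.mem_filter.1 hp).2⟩ hne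

/-- **VC dimension of `S_n`-equivariant QNN classifiers.** If a finite set `S` of density
matrices is shattered by the classifiers `ρ ↦ (Tr[U ρ U† O] ≥ b)`, where `U` ranges over
`S_n`-equivariant unitaries and `O` is an `S_n`-equivariant Hermitian measurement, then
`|S| ≤ Te_{n+1} = C(n+3, 3)`. -/
theorem vc_dim_Sn_equivariant (n : ℕ) (hn : 1 ≤ n)
    (O : Matrix (Fin n → Fin 2) (Fin n → Fin 2) ℂ) (hO : O.IsHermitian)
    (hOcomm : ∀ π : Equiv.Perm (Fin n), O * qubitRep n π = qubitRep n π * O)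
    (b : ℝ)
    (S : Finset (Matrix (Fin n → Fin 2) (Fin n → Fin 2) ℂ))
    (hS : ∀ ρ ∈ S, ρ.PosSemidef ∧ ρ.trace = 1)
    (hshatter : ∀ T ⊆ S, ∃ U : Matrix (Fin n → Fin 2) (Fin n → Fin 2) ℂ,
      U ∈ Matrix.unitaryGroup (Fin n → Fin 2) ℂ ∧
      (∀ π : Equiv.Perm (Fin n), U * qubitRep n π = qubitRep n π * U) ∧
      ∀ ρ ∈ S, (b ≤ ((U * ρ * Uᴴ * O).trace).re ↔ ρ ∈ T)) :
    S.card ≤ (n + 3).choose 3 := by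
  by_contra hlt
  push Not at hlt
  -- the real feature vector of a state
  let v : S → (Sym (Fin 2 × Fin 2) n → ℝ) := fun ρ o =>
    ∑ p with pairType n p = o, ((ρ.1 p.1 p.2).re + (ρ.1 p.1 p.2).im)
  have hdep : ¬ LinearIndependent ℝ v := by
    intro hli
    have h := hli.fintype_card_le_finrank
    rw [Module.finrank_fintype_fun_eq_card, Sym.card_sym_eq_choose] at h
    simp only [Fintype.card_coe, Fintype.card_prod, Fintype.card_fin] at h
    have e : (2 * 2 + n - 1).choose n = (n + 3).choose 3 := by
      rw [show 2 * 2 + n - 1 = n + 3 by omega]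
      exact Nat.choose_symm_add
    omega
  obtain ⟨g, hg, i0, hi0⟩ := Fintype.not_linearIndependent_iff.1 hdep
  -- normalise so that some coefficient is negative
  obtain ⟨c, hc, i1, hi1⟩ : ∃ c : S → ℝ, ∑ i, c i • v i = 0 ∧ ∃ i, c i < 0 := by
    rcases lt_or_gt_of_ne hi0 with h | h
    · exact ⟨g, hg, i0, h⟩
    · refine ⟨fun i => - g i, ?_, i0, by simpa using h⟩
      simp only [neg_smul, Finset.sum_neg_distrib, hg, neg_zero]
  classical
  obtain ⟨U, hU, hUc, hUS⟩ := hshatter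
    ((Finset.univ.filter (fun i : S => 0 ≤ c i)).map (Function.Embedding.subtype _)) (by
      intro x hx
      simp only [Finset.mem_map, Finset.mem_filter] at hx
      obtain ⟨y, _, rfl⟩ := hx
      exact y.2)
  have hUU : Uᴴ * U = 1 := Matrix.mem_unitaryGroup_iff'.1 hU
  have hUU' : U * Uᴴ = 1 := Matrix.mem_unitaryGroup_iff.1 hU
  have hUc' : ∀ π : Equiv.Perm (Fin n), Uᴴ * qubitRep n π = qubitRep n π * Uᴴ := by
    intro π
    calc Uᴴ * qubitRep n π = Uᴴ * (qubitRep n π * U) * Uᴴ := by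
          simp only [Matrix.mul_assoc, hUU', Matrix.mul_one]
      _ = qubitRep n π * Uᴴ := by
          rw [← hUc π, ← Matrix.mul_assoc, hUU, Matrix.one_mul]
  let H : Matrix (Fin n → Fin 2) (Fin n → Fin 2) ℂ := Uᴴ * O * U - (b : ℂ) • 1
  have hH : ∀ π : Equiv.Perm (Fin n), H * qubitRep n π = qubitRep n π * H := by
    intro π
    have : Uᴴ * O * U * qubitRep n π = qubitRep n π * (Uᴴ * O * U) := by
      rw [Matrix.mul_assoc, hUc π, ← Matrix.mul_assoc, Matrix.mul_assoc Uᴴ, hOcomm π,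
        ← Matrix.mul_assoc, hUc' π]
      simp only [Matrix.mul_assoc]
    simp only [H, Matrix.sub_mul, Matrix.mul_sub, this, Matrix.smul_mul, Matrix.mul_smul,
      Matrix.one_mul, Matrix.mul_one]
  have hval : ∀ i : S, ((i.1 * H).trace).re = ((U * i.1 * Uᴴ * O).trace).re - b := by
    intro i
    have h1 : (i.1 * (Uᴴ * O * U)).trace = (U * i.1 * Uᴴ * O).trace := by
      rw [← Matrix.mul_assoc, Matrix.trace_mul_comm]
      simp only [Matrix.mul_assoc]
    simp only [H, Matrix.mul_sub, Matrix.trace_sub, h1, Matrix.mul_smul, Matrix.mul_one,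
      Matrix.trace_smul, (hS i.1 i.2).2]
    simp
  let A : Matrix (Fin n → Fin 2) (Fin n → Fin 2) ℂ := ∑ i : S, (c i : ℂ) • i.1
  have hA : A.IsHermitian := by
    simp only [A, Matrix.IsHermitian, Matrix.conjTranspose_sum, Matrix.conjTranspose_smul]
    refine Finset.sum_congr rfl fun i _ => ?_
    rw [(hS i.1 i.2).1.isHermitian.eq]
    simp
  have hz : (A * H).trace = 0 := by
    apply trace_zero hA hH
    intro o
    have h := congrFun hc o
    simp only [Finset.sum_apply, Pi.smul_apply, smul_eq_mul, Pi.zero_apply, v,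
      Finset.mul_sum] at h
    rw [Finset.sum_comm] at h
    rw [← h]
    refine Finset.sum_congr rfl fun p _ => ?_
    simp [A, Matrix.sum_apply, Complex.re_sum, Complex.im_sum, mul_add, Finset.sum_add_distrib]
  have hsum : ∑ i : S, c i * ((i.1 * H).trace).re = 0 := by
    have h := congrArg Complex.re hz
    simpa [A, Matrix.sum_mul, Matrix.trace_sum, Matrix.trace_smul, Complex.re_sum] using h
  have hmem : ∀ i : S, 0 ≤ ((i.1 * H).trace).re ↔ 0 ≤ c i := by
    intro i
    rw [hval, sub_nonneg, hUS i.1 i.2]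
    simp
  have hpos : 0 < ∑ i : S, c i * ((i.1 * H).trace).re := by
    apply Finset.sum_pos'
    · intro i _
      rcases le_or_gt 0 (c i) with h | h
      · exact mul_nonneg h ((hmem i).2 h)
      · have : ((i.1 * H).trace).re < 0 := by
          by_contra h'
          exact absurd ((hmem i).1 (not_lt.1 h')) (not_le.2 h)
        exact (mul_pos_of_neg_of_neg h this).le
    · refine ⟨i1, Finset.mem_univ _, ?_⟩
      have : ((i1.1 * H).trace).re < 0 := by
        by_contra h'
        exact absurd ((hmem i1).1 (not_lt.1 h')) (not_le.2 hi1)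
      exact mul_pos_of_neg_of_neg hi1 this
  exact absurd hsum hpos.ne'
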